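/- Three point-vortices on the hyperbolic plane with vanishing momentum are relative equilibria (rigid motion of the shape): Let Γ₁, Γ₂, Γ₃ ∈ ℝ \ {0} and let r₁, r₂, r₃ : ℝ → ℝ³ be differentiable curves solving the point-vortex equations on the hyperbolic plane with N = 3, with rᵢ(0)·_L rᵢ(0) = 1 and third coordinate of rᵢ(0) positive for all i, (rᵢ(t)·_L rⱼ(t))² ≠ 1 for all i ≠ j and all t, and vanishing total linear momentum Γ₁ r₁(0) + Γ₂ r₂(0) + Γ₃ r₃(0) = 0. Then all pairwise Lorentzian pairings are constant in time: rᵢ(t) ·_L rⱼ(t) = rᵢ(0) ·_L rⱼ(0) for all i, j and all t. -/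

import Mathlib

/-!
Each interaction term is antisymmetric in the two vortices, so the total linear momentum is
conserved; if it vanishes initially, `∑ i, Γ i • r i = 0` at all times. Since `L * L = 1`, the
Lorentzian triple product `dotL (crossL a b) c` is the determinant with rows `a, b, c`, and the
derivative of a pairing `dotL (r i) (r j)` is a linear combination of the numbers
`Γ l * det ![r i, r l, r j]`. The linear relation among the three positions forces each of these
numbers to vanish.
-/

open scoped BigOperators

/-- The Lorentzian pairing a ·_L b = -a₁b₁ - a₂b₂ + a₃b₃ on ℝ³, for L = diag(-1,-1,1). -/
noncomputable def dotL (a b : Fin 3 → ℝ) : ℝ := -(a 0 * b 0) - a 1 * b 1 + a 2 * b 2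

/-- The Lorentzian cross product a ×_L b = L (a × b), for L = diag(-1,-1,1). -/
noncomputable def crossL (a b : Fin 3 → ℝ) : Fin 3 → ℝ :=
  ![-(crossProduct a b 0), -(crossProduct a b 1), crossProduct a b 2]

noncomputable def hypRHS (N : ℕ) (Γ : Fin N → ℝ) (r : Fin N → Fin 3 → ℝ) (i : Fin N) :
    Fin 3 → ℝ :=
  (-(1 / Real.pi)) •
    ∑ j ∈ Finset.univ.filter (fun j => j ≠ i),
      (Γ j / ((dotL (r i) (r j)) ^ 2 - 1)) • crossL (r i) (r j)

def IsPVSolutionHyp (N : ℕ) (Γ : Fin N → ℝ) (r : ℝ → Fin N → Fin 3 → ℝ) : Prop :=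
  (∀ t : ℝ, ∀ i j : Fin N, i ≠ j → (dotL (r t i) (r t j)) ^ 2 ≠ 1) ∧
  (∀ (t : ℝ) (i : Fin N), HasDerivAt (fun s => r s i) (hypRHS N Γ (r t) i) t)

section LinearAlgebra

open Matrix

variable {n R : Type*} [Fintype n] [DecidableEq n] [CommRing R]

lemma det_dvd_det_submatrix_id (M : Matrix n n R) (σ : n → n) :
    M.det ∣ (M.submatrix σ id).det := by
  have hfactor : (1 : Matrix n n R).submatrix σ id * M = M.submatrix σ id :=
    one_submatrix_mul σ (Equiv.refl n) M
  rw [← hfactor, det_mul]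
  exact dvd_mul_left _ _

lemma mul_det_eq_zero_of_vecMul_eq_zero {M : Matrix n n R} {c : n → R} (h : c ᵥ* M = 0) (j : n) :
    c j * M.det = 0 := by
  have hdet : M.det • c = 0 := by
    rw [← vecMul_one c, ← vecMul_smul, ← mul_adjugate, ← vecMul_vecMul, h, zero_vecMul]
  simpa [mul_comm] using congrFun hdet j

lemma mul_det_submatrix_eq_zero_of_vecMul_eq_zero {M : Matrix n n R} {c : n → R}
    (h : c ᵥ* M = 0) (σ : n → n) (j : n) : c j * (M.submatrix σ id).det = 0 := by
  obtain ⟨d, hd⟩ := det_dvd_det_submatrix_id M σ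
  rw [hd, ← mul_assoc, mul_det_eq_zero_of_vecMul_eq_zero h, zero_mul]

lemma mul_det_rows_eq_zero_of_sum_smul_eq_zero {c : Fin 3 → R} {r : Fin 3 → Fin 3 → R}
    (h : ∑ i, c i • r i = 0) (i j k l : Fin 3) : c l * det ![r i, r j, r k] = 0 := by
  have hrows : ![r i, r j, r k] = (of r).submatrix ![i, j, k] id := by
    ext a
    fin_cases a <;> rfl
  have hvec : c ᵥ* of r = 0 := (vecMul_eq_sum c (of r)).trans h
  rw [hrows]
  exact mul_det_submatrix_eq_zero_of_vecMul_eq_zero hvec ![i, j, k] l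

end LinearAlgebra

section LorentzianAlgebra

variable (a b c : Fin 3 → ℝ)

lemma dotL_comm : dotL a b = dotL b a := by
  simp only [dotL]
  ring

lemma dotL_eq_dotProduct : dotL a b = a ⬝ᵥ ![-b 0, -b 1, b 2] := by
  simp [dotL, dotProduct, Fin.sum_univ_three, sub_eq_add_neg]

lemma dotL_smul_left (x : ℝ) : dotL (x • a) b = x * dotL a b := by
  simp only [dotL_eq_dotProduct, smul_dotProduct, smul_eq_mul]

lemma dotL_sum_left {ι : Type*} (s : Finset ι) (f : ι → Fin 3 → ℝ) :
    dotL (∑ i ∈ s, f i) b = ∑ i ∈ s, dotL (f i) b := by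
  simp only [dotL_eq_dotProduct, sum_dotProduct]

lemma crossL_self : crossL a a = 0 := by
  simp [crossL]

lemma neg_crossL : -crossL a b = crossL b a := by
  simp [crossL, ← cross_anticomm b a]

lemma dotL_crossL_eq_det : dotL (crossL a b) c = Matrix.det ![a, b, c] := by
  have htriple : dotL (crossL a b) c = c ⬝ᵥ crossProduct a b := by
    simp only [dotL, crossL, Matrix.cons_val, dotProduct, Fin.sum_univ_three]
    ring
  rw [htriple, triple_product_permutation, triple_product_eq_det]

end LorentzianAlgebra

lemma hasDerivAt_dotL {f g : ℝ → Fin 3 → ℝ} {f' g' : Fin 3 → ℝ} {t : ℝ}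
    (hf : HasDerivAt f f' t) (hg : HasDerivAt g g' t) :
    HasDerivAt (fun s => dotL (f s) (g s)) (dotL f' (g t) + dotL (f t) g') t := by
  have hf := hasDerivAt_pi.1 hf
  have hg := hasDerivAt_pi.1 hg
  refine ((((hf 0).mul (hg 0)).neg.sub ((hf 1).mul (hg 1))).add
    ((hf 2).mul (hg 2))).congr_deriv ?_
  simp only [dotL]
  ring

lemma sum_sum_eq_zero_of_neg_eq_swap {ι E : Type*} [Fintype ι] [AddCommGroup E]
    [IsAddTorsionFree E] {f : ι → ι → E} (hf : ∀ i j, -f i j = f j i) : ∑ i, ∑ j, f i j = 0 := by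
  rw [← self_eq_neg]
  calc ∑ i, ∑ j, f i j = ∑ i, ∑ j, f j i := Finset.sum_comm
    _ = -∑ i, ∑ j, f i j := by simp only [← Finset.sum_neg_distrib, hf]

section PointVortices

variable {N : ℕ} (Γ : Fin N → ℝ)

lemma hypRHS_eq_sum_univ (r : Fin N → Fin 3 → ℝ) (i : Fin N) :
    hypRHS N Γ r i = (-(1 / Real.pi)) •
      ∑ j, (Γ j / ((dotL (r i) (r j)) ^ 2 - 1)) • crossL (r i) (r j) := by
  rw [hypRHS, Finset.sum_filter_of_ne]
  rintro j - hj rfl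
  exact hj (by rw [crossL_self, smul_zero])

lemma sum_smul_hypRHS_eq_zero (r : Fin N → Fin 3 → ℝ) : ∑ i, Γ i • hypRHS N Γ r i = 0 := by
  have hinteraction : ∑ i, ∑ j,
      (Γ i * (Γ j / (dotL (r i) (r j) ^ 2 - 1))) • crossL (r i) (r j) = 0 := by
    refine sum_sum_eq_zero_of_neg_eq_swap fun i j => ?_
    rw [← smul_neg, neg_crossL, dotL_comm, mul_div_left_comm]
  calc ∑ i, Γ i • hypRHS N Γ r i
      = (-(1 / Real.pi)) • ∑ i, ∑ j,
          (Γ i * (Γ j / (dotL (r i) (r j) ^ 2 - 1))) • crossL (r i) (r j) := by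
        simp only [hypRHS_eq_sum_univ, Finset.smul_sum, smul_smul, mul_left_comm]
    _ = 0 := by rw [hinteraction, smul_zero]

lemma dotL_hypRHS_eq_sum_det (r : Fin N → Fin 3 → ℝ) (i k : Fin N) :
    dotL (hypRHS N Γ r i) (r k) = -(1 / Real.pi) *
      ∑ j, Γ j / ((dotL (r i) (r j)) ^ 2 - 1) * Matrix.det ![r i, r j, r k] := by
  simp only [hypRHS_eq_sum_univ, dotL_smul_left, dotL_sum_left, dotL_crossL_eq_det]

variable {Γ} in
lemma dotL_hypRHS_eq_zero {r : Fin N → Fin 3 → ℝ} {i k : Fin N}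
    (h : ∀ j, Γ j * Matrix.det ![r i, r j, r k] = 0) : dotL (hypRHS N Γ r i) (r k) = 0 := by
  simp only [dotL_hypRHS_eq_sum_det, div_mul_eq_mul_div, h, zero_div, Finset.sum_const_zero,
    mul_zero]

end PointVortices

namespace IsPVSolutionHyp

variable {N : ℕ} {Γ : Fin N → ℝ} {r : ℝ → Fin N → Fin 3 → ℝ}

lemma totalMomentum_eq (hsol : IsPVSolutionHyp N Γ r) (s t : ℝ) :
    ∑ i, Γ i • r s i = ∑ i, Γ i • r t i := by
  have hderiv (u : ℝ) : HasDerivAt (fun v => ∑ i, Γ i • r v i) 0 u := by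
    rw [← sum_smul_hypRHS_eq_zero Γ (r u)]
    exact HasDerivAt.fun_sum fun i _ => (hsol.2 u i).const_smul (Γ i)
  exact is_const_of_deriv_eq_zero (fun u => (hderiv u).differentiableAt)
    (fun u => (hderiv u).deriv) s t

lemma dotL_eq_of_mul_det_eq_zero (hsol : IsPVSolutionHyp N Γ r)
    (hdet : ∀ t i j k, Γ j * Matrix.det ![r t i, r t j, r t k] = 0) (s t : ℝ) (i j : Fin N) :
    dotL (r s i) (r s j) = dotL (r t i) (r t j) := by
  have hderiv (u : ℝ) : HasDerivAt (fun v => dotL (r v i) (r v j)) 0 u := by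
    refine (hasDerivAt_dotL (hsol.2 u i) (hsol.2 u j)).congr_deriv ?_
    rw [dotL_comm (r u i), dotL_hypRHS_eq_zero fun l => hdet u i l j,
      dotL_hypRHS_eq_zero fun l => hdet u j l i, add_zero]
  exact is_const_of_deriv_eq_zero (fun u => (hderiv u).differentiableAt)
    (fun u => (hderiv u).deriv) s t

end IsPVSolutionHyp

theorem hyp_three_vortices_zero_momentum_relative_equilibrium_general
    {Γ : Fin 3 → ℝ} {r : ℝ → Fin 3 → Fin 3 → ℝ} (hsol : IsPVSolutionHyp 3 Γ r)
    {t₀ : ℝ} (hmom : ∑ i, Γ i • r t₀ i = 0) (s t : ℝ) (i j : Fin 3) :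
    dotL (r s i) (r s j) = dotL (r t i) (r t j) := by
  have hmom_all (u : ℝ) : ∑ i, Γ i • r u i = 0 := (hsol.totalMomentum_eq u t₀).trans hmom
  have hdet (u : ℝ) (i j k : Fin 3) : Γ j * Matrix.det ![r u i, r u j, r u k] = 0 :=
    mul_det_rows_eq_zero_of_sum_smul_eq_zero (hmom_all u) i j k j
  exact hsol.dotL_eq_of_mul_det_eq_zero hdet s t i j

theorem hyp_three_vortices_zero_momentum_relative_equilibrium
    (Γ : Fin 3 → ℝ) (hΓ : ∀ i, Γ i ≠ 0)
    (r : ℝ → Fin 3 → Fin 3 → ℝ) (hsol : IsPVSolutionHyp 3 Γ r)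
    (hhyp : ∀ i : Fin 3, dotL (r 0 i) (r 0 i) = 1) (hpos : ∀ i : Fin 3, r 0 i 2 > 0)
    (hmom : ∑ i, Γ i • r 0 i = 0) :
    ∀ (t : ℝ) (i j : Fin 3), dotL (r t i) (r t j) = dotL (r 0 i) (r 0 j) := fun t i j =>
  hyp_three_vortices_zero_momentum_relative_equilibrium_general hsol hmom t 0 i j
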